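/- arXiv:2207.05006 — 3 statements merged into one kernel-verified Lean document; each statement's English description precedes it below -/
import Mathlib

section
/- Let V be a type, R : V → V → Prop a binary relation, g : Set V, and let C = {v | ∃ u ∈ g, Relation.ReflTransGen R u v} be the set of vertices reachable from g under R. Then for every v ∈ C there exists u ∈ g such that u and v are related by the reflexive–transitive closure of the relation R restricted to C, i.e. Relation.ReflTransGen (fun a b => R a b ∧ a ∈ C ∧ b ∈ C) u v. In other words, every retained vertex is reachable from the seed set by a chain all of whose intermediate vertices are themselves retained. (This is the completeness direction of the SCRUB proposition: restricting the planning problem to the sparsified subgraph does not destroy any reachability used by a plan, so a plan exists on the scrubbed graph iff one exists on the full graph.) -/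
/-- Completeness of SCRUB: every vertex retained in the sufficient set
`C = {v | ∃ u ∈ g, Relation.ReflTransGen R u v}` is reachable from the seed set `g`
via a chain lying entirely inside `C`. -/
theorem scrub_reachable_within_retained {V : Type*} (R : V → V → Prop) (g : Set V)
    (v : V) (hv : v ∈ {v | ∃ u ∈ g, Relation.ReflTransGen R u v}) :
    ∃ u ∈ g, Relation.ReflTransGen
      (fun a b => R a b ∧ a ∈ {v | ∃ u ∈ g, Relation.ReflTransGen R u v}
        ∧ b ∈ {v | ∃ u ∈ g, Relation.ReflTransGen R u v}) u v := by
  obtain ⟨u, hu, h⟩ := hv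
  refine ⟨u, hu, ?_⟩
  induction h with
  | refl => exact Relation.ReflTransGen.refl
  | tail hab hbc ih => exact ih.tail ⟨hbc, ⟨u, hu, hab⟩, ⟨u, hu, hab.tail hbc⟩⟩
end

section
/- Let G be a tree on a finite vertex type V (a connected acyclic simple graph), r : V a root, and g : Set V a set of goal vertices. Let C be the union, over v ∈ g, of the vertex sets of the unique paths in G from r to v. Then every subset T of V that contains r and g and such that, in the subgraph of G induced on T, r is reachable from every v ∈ g, must satisfy C ⊆ T. (This is the minimality claim of the SCRUB proposition: any scene subgraph in which the agent at the root can still reach every goal object must contain all nodes retained by SCRUB, so SCRUB's output is the minimal sufficient subgraph.) -/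
/-- Minimality of SCRUB: in a tree `G` rooted at `r`, the union `C` of the supports of
the unique paths from `r` to the goal vertices `g` is contained in any vertex set `T`
containing `r` and `g` in whose induced subgraph `r` remains reachable from every
goal vertex. -/
theorem scrub_minimality {V : Type*} [Fintype V] (G : SimpleGraph V)
    (hG : G.IsTree) (r : V) (g : Set V)
    (T : Set V) (hrT : r ∈ T) (hgT : g ⊆ T)
    (hreach : ∀ v (hv : v ∈ g),
      (G.induce T).Reachable ⟨v, hgT hv⟩ ⟨r, hrT⟩) :
    {x | ∃ v ∈ g, ∃ p : G.Walk r v, p.IsPath ∧ x ∈ p.support} ⊆ T := by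
  classical
  rintro x ⟨v, hv, p, hp, hx⟩
  obtain ⟨q, hq⟩ := (hreach v hv).symm.exists_isPath
  let f : G.induce T →g G := (SimpleGraph.Embedding.induce T).toHom
  have hf : Function.Injective f := Subtype.val_injective
  have hq' : (q.map f).IsPath := SimpleGraph.Walk.map_isPath_of_injective hf hq
  have h := hG.isAcyclic.path_unique ⟨p, hp⟩ ⟨q.map f, hq'⟩
  have h' : p = q.map f := congrArg Subtype.val h
  rw [h'] at hx
  have hs := SimpleGraph.Walk.support_map f q
  have hx' : x ∈ q.support.map f := hs ▸ hx
  obtain ⟨y, -, rfl⟩ := List.mem_map.1 hx'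
  exact y.2
end

section
/- Let V be a finite type, R : V → V → Prop a binary relation, and g : Finset V a seed set. Define step : Finset V → Finset V by step S = S ∪ (Finset.univ.filter (fun v => ∃ u ∈ S, R u v)) (using a decidable instance for R and membership). Then the iterate step^[Fintype.card V] g, viewed as a set, equals {v | ∃ u ∈ g, Relation.ReflTransGen R u v}. (This combines the termination and correctness claims for SCRUB: after at most |V| expansion iterations, the algorithm has computed exactly the set of objects reachable from the goal objects along binary predicates.) -/
theorem scrub_aux_fixed {V : Type*} [Fintype V] (f : Finset V → Finset V)
    (hf : ∀ S, S ⊆ f S) (g : Finset V) :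
    f (f^[Fintype.card V] g) = f^[Fintype.card V] g := by
  have key : ∀ n, f (f^[n] g) = f^[n] g ∨ n ≤ (f^[n] g).card := by
    intro n
    induction n with
    | zero => right; exact Nat.zero_le _
    | succ n ih =>
      rw [Function.iterate_succ_apply']
      by_cases h : f (f^[n] g) = f^[n] g
      · left; rw [h, h]
      · right
        have h1 := ih.resolve_left h
        have h2 : (f^[n] g).card < (f (f^[n] g)).card :=
          Finset.card_lt_card ((hf _).ssubset_of_ne (Ne.symm h))
        omega
  rcases key (Fintype.card V) with h | h
  · exact h
  · have h1 : f^[Fintype.card V] g = Finset.univ :=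
      Finset.eq_univ_of_card _ (le_antisymm (Finset.card_le_univ _) h)
    have h2 := hf (f^[Fintype.card V] g)
    rw [h1] at h2 ⊢
    exact Finset.univ_subset_iff.mp h2

/-- SCRUB termination + correctness: iterating the one-step expansion
`step S = S ∪ {v | ∃ u ∈ S, R u v}` for `Fintype.card V` steps starting from the
goal set `g` yields exactly the set of vertices reachable from `g` under `R`. -/
theorem scrub_iterate_eq_reachable {V : Type*} [Fintype V] [DecidableEq V]
    (R : V → V → Prop) [DecidableRel R] (g : Finset V) :
    (((fun S : Finset V =>
        S ∪ Finset.univ.filter (fun v => ∃ u ∈ S, R u v))^[Fintype.card V] g : Finset V)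
      : Set V)
    = {v | ∃ u ∈ g, Relation.ReflTransGen R u v} := by
  set f : Finset V → Finset V := fun S : Finset V =>
        S ∪ Finset.univ.filter (fun v => ∃ u ∈ S, R u v) with hfdef
  have hmem : ∀ S v, v ∈ f S ↔ v ∈ S ∨ ∃ u ∈ S, R u v := by
    intro S v
    simp [hfdef]
  have hf : ∀ S, S ⊆ f S := fun S v hv => (hmem S v).2 (Or.inl hv)
  have hfix := scrub_aux_fixed f hf g
  have hsub : ∀ n, g ⊆ f^[n] g := by
    intro n
    induction n with
    | zero => exact fun _ h => h
    | succ n ih =>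
      rw [Function.iterate_succ_apply']
      exact ih.trans (hf _)
  have hreach : ∀ n v, v ∈ f^[n] g → ∃ u ∈ g, Relation.ReflTransGen R u v := by
    intro n
    induction n with
    | zero => exact fun v hv => ⟨v, hv, Relation.ReflTransGen.refl⟩
    | succ n ih =>
      intro v hv
      rw [Function.iterate_succ_apply', hmem] at hv
      rcases hv with hv | ⟨w, hw, hr⟩
      · exact ih v hv
      · obtain ⟨u, hu, h⟩ := ih w hw
        exact ⟨u, hu, h.tail hr⟩
  ext v
  constructor
  · intro hv
    exact hreach _ v (Finset.mem_coe.1 hv)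
  · rintro ⟨u, hu, h⟩
    rw [Finset.mem_coe]
    induction h with
    | refl => exact hsub _ hu
    | tail _ hr ih =>
      rw [← hfix, hmem]
      exact Or.inr ⟨_, ih, hr⟩
end
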